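/- arXiv:0911.1900 — 8 statements merged into one kernel-verified Lean document; each statement's English description precedes it below -/
import Mathlib

section
/- Let G=(V,A) be a finite loopless digraph, r ∈ V, T an out-tree of G rooted at r, k a natural number, and x ∈ V(T). Assume that every arc (x,u) ∈ A satisfies either (x,u) ∈ T or u ∉ V(T). If there exists a spanning out-tree T' of G rooted at r with T' ⪰ T, x internal in T', and |leaves(T')| ≥ k, then there exists a spanning out-tree T'' of G rooted at r with T'' ⪰ T, |leaves(T'')| ≥ k, x internal in T'', and every arc of A with tail x belongs to T''. -/
variable {V : Type*} [DecidableEq V] [Fintype V]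

/-- The vertex set of an arc set `T` together with the root `r`. -/
def dverts (r : V) (T : Finset (V × V)) : Finset V :=
  insert r (T.image Prod.fst ∪ T.image Prod.snd)

/-- In-degree of `v` in the arc set `T`. -/
def dInDeg (T : Finset (V × V)) (v : V) : ℕ :=
  (T.filter fun a => a.2 = v).card

/-- Out-degree of `v` in the arc set `T`. -/
def dOutDeg (T : Finset (V × V)) (v : V) : ℕ :=
  (T.filter fun a => a.1 = v).card

/-- Reachability by a directed path using only arcs of `T`. -/
def DReach (T : Finset (V × V)) (x y : V) : Prop :=
  Relation.ReflTransGen (fun a b => (a, b) ∈ T) x y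

/-- A loopless arc set. -/
def DLoopless (A : Finset (V × V)) : Prop := ∀ a ∈ A, a.1 ≠ a.2

/-- `T` is an out-tree of the digraph with arc set `A`, rooted at `r`. -/
def IsOutTree (A : Finset (V × V)) (r : V) (T : Finset (V × V)) : Prop :=
  T ⊆ A ∧ dInDeg T r = 0 ∧ (∀ v ∈ dverts r T, v ≠ r → dInDeg T v = 1) ∧
    ∀ v ∈ dverts r T, DReach T r v

/-- `T` is a spanning out-tree of the digraph with arc set `A`, rooted at `r`. -/
def IsSpanningOutTree (A : Finset (V × V)) (r : V) (T : Finset (V × V)) : Prop :=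
  IsOutTree A r T ∧ dverts r T = Finset.univ

/-- The leaves of an out-tree: vertices of out-degree 0. -/
def dleaves (r : V) (T : Finset (V × V)) : Finset V :=
  (dverts r T).filter fun v => dOutDeg T v = 0

theorem stmt0 (A T : Finset (V × V)) (r x : V) (k : ℕ)
    (hA : DLoopless A) (hT : IsOutTree A r T) (hx : x ∈ dverts r T)
    (hinner : ∀ u : V, (x, u) ∈ A → (x, u) ∈ T ∨ u ∉ dverts r T)
    (h : ∃ T' : Finset (V × V), IsSpanningOutTree A r T' ∧ T ⊆ T' ∧
      1 ≤ dOutDeg T' x ∧ k ≤ (dleaves r T').card) :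
    ∃ T'' : Finset (V × V), IsSpanningOutTree A r T'' ∧ T ⊆ T'' ∧
      k ≤ (dleaves r T'').card ∧ 1 ≤ dOutDeg T'' x ∧
      ∀ u : V, (x, u) ∈ A → (x, u) ∈ T'' := by
  obtain ⟨T', ⟨⟨hsub, hr0, hin, hreach⟩, hspan⟩, hTT, hxo, hk⟩ := h
  obtain ⟨hTA, hTr, hTin, hTreach⟩ := hT
  have noin : ∀ p, (p, r) ∉ T' := by
    intro p hp
    have := Finset.filter_eq_empty_iff.1 (Finset.card_eq_zero.1 hr0) hp
    exact this rfl
  have hxr : ∀ u, (x, u) ∈ A → u ≠ r := by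
    rintro u hu rfl
    rcases hinner u hu with h1 | h1
    · exact noin _ (hTT h1)
    · exact h1 (by simp [dverts])
  have uniq : ∀ p q v, (p, v) ∈ T' → (q, v) ∈ T' → p = q := by
    intro p q v hp hq
    have hv : v ≠ r := by
      rintro rfl
      exact noin _ hp
    have h1 := hin v (by rw [hspan]; simp) hv
    have h2 := Finset.card_le_one.1 (le_of_eq h1) (p, v) (by simp [hp]) (q, v) (by simp [hq])
    exact (Prod.mk.inj h2).1
  let S : Finset (V × V) := (T'.filter fun a => (x, a.2) ∉ A) ∪ (A.filter fun a => a.1 = x)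
  have memS : ∀ p u, (p, u) ∈ S ↔ ((p, u) ∈ T' ∧ (x, u) ∉ A) ∨ ((p, u) ∈ A ∧ p = x) := by
    intro p u
    simp [S]
  have hxS : ∀ u, (x, u) ∈ A → (x, u) ∈ S := fun u hu => (memS x u).2 (Or.inr ⟨hu, rfl⟩)
  have hTS : T ⊆ S := by
    rintro ⟨p, u⟩ hp
    by_cases hu : (x, u) ∈ A
    · rcases hinner u hu with h1 | h1
      · have := uniq p x u (hTT hp) (hTT h1)
        subst this
        exact hxS u hu
      · exact absurd (by
          simp only [dverts, Finset.mem_insert, Finset.mem_union, Finset.mem_image]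
          exact Or.inr (Or.inr ⟨_, hp, rfl⟩)) h1
    · exact (memS p u).2 (Or.inl ⟨hTT hp, hu⟩)
  have hreachS : ∀ v, DReach S r v := by
    have hxreach : DReach S r x :=
      Relation.ReflTransGen.mono (fun a b hab => hTS hab) _ _ (hTreach x hx)
    intro v
    have hv : DReach T' r v := hreach v (by rw [hspan]; simp)
    induction hv with
    | refl => exact Relation.ReflTransGen.refl
    | @tail b c _ hbc ih =>
      by_cases hc : (x, c) ∈ A
      · exact Relation.ReflTransGen.tail hxreach (hxS c hc)
      · exact Relation.ReflTransGen.tail ih ((memS b c).2 (Or.inl ⟨hbc, hc⟩))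
  have hspanS : dverts r S = Finset.univ := by
    ext v
    simp only [Finset.mem_univ, iff_true, dverts, Finset.mem_insert, Finset.mem_union,
      Finset.mem_image]
    rcases Relation.ReflTransGen.cases_tail (hreachS v) with h1 | ⟨c, _, hc⟩
    · exact Or.inl h1
    · exact Or.inr (Or.inr ⟨_, hc, rfl⟩)
  refine ⟨S, ⟨⟨?_, ?_, ?_, fun v _ => hreachS v⟩, hspanS⟩, hTS, ?_, ?_, hxS⟩
  · rintro ⟨p, u⟩ hp
    rcases (memS p u).1 hp with h1 | h1
    · exact hsub h1.1
    · exact h1.1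
  · refine Finset.card_eq_zero.2 (Finset.filter_eq_empty_iff.2 ?_)
    rintro ⟨p, u⟩ hp hu
    obtain rfl : u = r := hu
    rcases (memS p u).1 hp with h1 | ⟨h1, rfl⟩
    · exact noin _ h1.1
    · exact hxr _ h1 rfl
  · intro v _ hv
    refine le_antisymm (Finset.card_le_one.2 ?_) (Finset.card_pos.2 ?_)
    · rintro ⟨p, u⟩ hp ⟨q, w⟩ hq
      obtain ⟨hp1, hu⟩ := Finset.mem_filter.1 hp
      obtain ⟨hq1, hw⟩ := Finset.mem_filter.1 hq
      obtain rfl : u = v := hu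
      obtain rfl : w = u := hw
      rcases (memS p w).1 hp1 with ⟨h1, h2⟩ | ⟨h1, rfl⟩ <;>
        rcases (memS q w).1 hq1 with ⟨h3, h4⟩ | ⟨h3, rfl⟩
      · rw [uniq p q w h1 h3]
      · exact absurd h3 h2
      · exact absurd h1 h4
      · rfl
    · rcases Relation.ReflTransGen.cases_tail (hreachS v) with h1 | ⟨c, _, hc⟩
      · exact absurd h1 hv
      · exact ⟨(c, v), Finset.mem_filter.2 ⟨hc, rfl⟩⟩
  · refine hk.trans (Finset.card_le_card ?_)
    intro v hv
    have hv0 : dOutDeg T' v = 0 := (Finset.mem_filter.1 hv).2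
    refine Finset.mem_filter.2 ⟨by rw [hspanS]; simp, ?_⟩
    refine Finset.card_eq_zero.2 (Finset.filter_eq_empty_iff.2 ?_)
    rintro ⟨p, u⟩ hp hu
    obtain rfl : p = v := hu
    rcases (memS p u).1 hp with h1 | ⟨h1, rfl⟩
    · exact Finset.filter_eq_empty_iff.1 (Finset.card_eq_zero.1 hv0) h1.1 rfl
    · omega
  · obtain ⟨⟨p, u⟩, hp⟩ := Finset.card_pos.1 hxo
    obtain ⟨hp1, hu⟩ := Finset.mem_filter.1 hp
    obtain rfl : p = x := hu
    exact Finset.card_pos.2 ⟨(p, u), Finset.mem_filter.2 ⟨hxS u (hsub hp1), rfl⟩⟩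
end

section
/- Let G=(V,A) be a finite loopless digraph, r ∈ V, T an out-tree of G rooted at r, and v ∈ V(T) a vertex with out-degree 0 in T whose out-neighborhood in G is N⁺(v) = {x₁,x₂} with x₁ ≠ x₂. Suppose there exists a vertex u ≠ v with out-neighborhood N⁺(u) = {x₁,x₂} in G. Let T' be a spanning out-tree of G rooted at r with T' ⪰ T in which v is a leaf, chosen so that |leaves(T')| is maximum among all such trees, and let T* be a spanning out-tree of G rooted at r with T* ⪰ T in which v is internal and both x₁ and x₂ are leaves. Then |leaves(T')| ≥ |leaves(T*)|. -/
variable {V : Type*} [DecidableEq V] [Fintype V]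

theorem stmt1 (A T T' Tstar : Finset (V × V)) (r v x₁ x₂ u : V)
    (hA : DLoopless A) (hT : IsOutTree A r T) (hv : v ∈ dverts r T)
    (hvdeg : dOutDeg T v = 0)
    (hNv : ∀ y : V, (v, y) ∈ A ↔ y = x₁ ∨ y = x₂) (hx : x₁ ≠ x₂)
    (huv : u ≠ v) (hNu : ∀ y : V, (u, y) ∈ A ↔ y = x₁ ∨ y = x₂)
    (hT' : IsSpanningOutTree A r T') (hTT' : T ⊆ T')
    (hvleaf : dOutDeg T' v = 0)
    (hopt : ∀ S : Finset (V × V), IsSpanningOutTree A r S → T ⊆ S →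
      dOutDeg S v = 0 → (dleaves r S).card ≤ (dleaves r T').card)
    (hTs : IsSpanningOutTree A r Tstar) (hTTs : T ⊆ Tstar)
    (hvint : 1 ≤ dOutDeg Tstar v) (hx1 : dOutDeg Tstar x₁ = 0)
    (hx2 : dOutDeg Tstar x₂ = 0) :
    (dleaves r Tstar).card ≤ (dleaves r T').card := by
  obtain ⟨⟨hsA, hr0, hin, hreach⟩, hspan⟩ := hTs
  have outz : ∀ (X : Finset (V × V)) (w : V), dOutDeg X w = 0 ↔ ∀ y, (w, y) ∉ X := by
    intro X w
    unfold dOutDeg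
    rw [Finset.card_eq_zero, Finset.filter_eq_empty_iff]
    constructor
    · intro h y hy
      exact h hy rfl
    · rintro h ⟨a, b⟩ hab rfl
      exact h b hab
  have inz : ∀ (X : Finset (V × V)) (w : V), dInDeg X w = 0 ↔ ∀ y, (y, w) ∉ X := by
    intro X w
    unfold dInDeg
    rw [Finset.card_eq_zero, Finset.filter_eq_empty_iff]
    constructor
    · intro h y hy
      exact h hy rfl
    · rintro h ⟨a, b⟩ hab rfl
      exact h a hab
  have hux1 : u ≠ x₁ := hA (u, x₁) ((hNu x₁).2 (Or.inl rfl))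
  have hux2 : u ≠ x₂ := hA (u, x₂) ((hNu x₂).2 (Or.inr rfl))
  let f : V × V → V × V := fun a => if a.1 = v then (u, a.2) else a
  have fsnd : ∀ a, (f a).2 = a.2 := by
    intro a; simp only [f]; split_ifs <;> rfl
  obtain ⟨S, hSdef⟩ : ∃ S, S = Tstar.image f := ⟨_, rfl⟩
  have memS : ∀ a b, (a, b) ∈ S ↔ (a ≠ v ∧ (a, b) ∈ Tstar) ∨ (a = u ∧ (v, b) ∈ Tstar) := by
    intro a b
    rw [hSdef, Finset.mem_image]
    constructor
    · rintro ⟨⟨c, d⟩, hcd, h⟩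
      simp only [f] at h
      split_ifs at h with hc
      · subst hc
        cases h
        exact Or.inr ⟨rfl, hcd⟩
      · cases h
        exact Or.inl ⟨hc, hcd⟩
    · rintro (⟨h1, h2⟩ | ⟨rfl, h2⟩)
      · exact ⟨(a, b), h2, by simp [f, h1]⟩
      · exact ⟨(v, b), h2, by simp [f]⟩
  have hSin : ∀ w, dInDeg S w ≤ dInDeg Tstar w := by
    intro w
    unfold dInDeg
    refine (Finset.card_le_card (t := (Tstar.filter fun a => a.2 = w).image f) ?_).trans
      Finset.card_image_le
    intro a ha
    rw [Finset.mem_filter, hSdef, Finset.mem_image] at ha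
    obtain ⟨⟨c, hc, rfl⟩, h2⟩ := ha
    rw [fsnd] at h2
    exact Finset.mem_image_of_mem _ (Finset.mem_filter.2 ⟨hc, h2⟩)
  have hSpos : ∀ w, w ≠ r → ∃ y, (y, w) ∈ S := by
    intro w hw
    have h1 := hin w (hspan ▸ Finset.mem_univ w) hw
    have h2 : ¬ ∀ y, (y, w) ∉ Tstar := by
      rw [← inz]; omega
    push Not at h2
    obtain ⟨y, hy⟩ := h2
    by_cases hyv : y = v
    · exact ⟨u, (memS _ _).2 (Or.inr ⟨rfl, hyv ▸ hy⟩)⟩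
    · exact ⟨y, (memS _ _).2 (Or.inl ⟨hyv, hy⟩)⟩
  have hSspan : dverts r S = Finset.univ := by
    ext w
    simp only [Finset.mem_univ, iff_true]
    unfold dverts
    by_cases hw : w = r
    · simp [hw]
    · obtain ⟨y, hy⟩ := hSpos w hw
      exact Finset.mem_insert_of_mem (Finset.mem_union_right _
        (Finset.mem_image.2 ⟨_, hy, rfl⟩))
  rw [outz] at hx1 hx2
  have hvx : ∀ b, (v, b) ∈ Tstar → b = x₁ ∨ b = x₂ := fun b hb => (hNv b).1 (hsA hb)
  have reach1 : ∀ w, DReach Tstar r w → w ≠ x₁ → w ≠ x₂ → DReach S r w := by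
    intro w hw
    induction hw with
    | refl => intro _ _; exact Relation.ReflTransGen.refl
    | @tail b c hb hbc ih =>
      intro h1 h2
      have hb1 : b ≠ x₁ := by rintro rfl; exact hx1 _ hbc
      have hb2 : b ≠ x₂ := by rintro rfl; exact hx2 _ hbc
      have hbv : b ≠ v := by
        rintro rfl
        rcases hvx _ hbc with h | h
        · exact h1 h
        · exact h2 h
      exact Relation.ReflTransGen.tail (ih hb1 hb2) ((memS _ _).2 (Or.inl ⟨hbv, hbc⟩))
  have memU : ∀ w, DReach Tstar r w := fun w => hreach w (hspan ▸ Finset.mem_univ w)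
  have reach2 : ∀ w, DReach S r w := by
    intro w
    by_cases hw : w = r
    · rw [hw]; exact Relation.ReflTransGen.refl
    obtain ⟨y, hy⟩ := hSpos w hw
    refine Relation.ReflTransGen.tail (b := y) ?_ hy
    rcases (memS _ _).1 hy with ⟨_, h⟩ | ⟨rfl, h⟩
    · exact reach1 y (memU y) (by rintro rfl; exact hx1 _ h) (by rintro rfl; exact hx2 _ h)
    · exact reach1 y (memU y) hux1 hux2
  have hSA : S ⊆ A := by
    rintro ⟨a, b⟩ hab
    rcases (memS _ _).1 hab with ⟨_, h⟩ | ⟨rfl, h⟩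
    · exact hsA h
    · exact (hNu b).2 (hvx b h)
  have hST : IsSpanningOutTree A r S := by
    refine ⟨⟨hSA, ?_, ?_, fun w _ => reach2 w⟩, hSspan⟩
    · have := hSin r; omega
    · intro w _ hw
      have h1 := hSin w
      rw [hin w (hspan ▸ Finset.mem_univ w) hw] at h1
      have h2 : dInDeg S w ≠ 0 := by
        rw [Ne, inz]
        intro h
        obtain ⟨y, hy⟩ := hSpos w hw
        exact h y hy
      omega
  have hTS : T ⊆ S := by
    rintro ⟨a, b⟩ hab
    refine (memS _ _).2 (Or.inl ⟨?_, hTTs hab⟩)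
    rintro rfl
    exact (outz _ _).1 hvdeg b hab
  have hSv : dOutDeg S v = 0 := by
    rw [outz]
    intro y hy
    rcases (memS _ _).1 hy with ⟨h, _⟩ | ⟨h, _⟩
    · exact h rfl
    · exact huv h.symm
  refine le_trans ?_ (hopt S hST hTS hSv)
  have hsub : insert v ((dleaves r Tstar).erase u) ⊆ dleaves r S := by
    intro w hw
    unfold dleaves
    rw [hSspan, Finset.mem_filter]
    refine ⟨Finset.mem_univ _, ?_⟩
    rcases Finset.mem_insert.1 hw with rfl | hw
    · exact hSv
    · rw [Finset.mem_erase] at hw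
      obtain ⟨hwu, hw⟩ := hw
      have hw0 := (outz _ _).1 (Finset.mem_filter.1 hw).2
      rw [outz]
      intro y hy
      rcases (memS _ _).1 hy with ⟨_, h⟩ | ⟨h, _⟩
      · exact hw0 y h
      · exact hwu h
  have hvn : v ∉ (dleaves r Tstar).erase u := by
    intro h
    have := (Finset.mem_filter.1 (Finset.mem_of_mem_erase h)).2
    omega
  have h1 := Finset.card_le_card hsub
  rw [Finset.card_insert_of_notMem hvn] at h1
  have h2 := Finset.pred_card_le_card_erase (s := dleaves r Tstar) (a := u)
  omega
end

section
/- Let G=(V,A) be a finite loopless digraph, r ∈ V, T an out-tree of G rooted at r, and v ∈ V(T) a vertex with out-degree 0 in T whose out-neighborhood in G is N⁺(v) = {x₁,x₂} with x₁ ≠ x₂. Assume x₁ and x₂ each have in-degree at least 2 in G. Let T* be a spanning out-tree of G rooted at r with T* ⪰ T in which v is internal, both x₁ and x₂ are leaves, and some vertex u ∈ (N⁻(x₁) ∪ N⁻(x₂)) \ {v,x₁,x₂} is internal. Let T' be a spanning out-tree of G rooted at r with T' ⪰ T in which v is a leaf, chosen so that |leaves(T')| is maximum among all such trees. Then |leaves(T')|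 ≥ |leaves(T*)|. -/
variable {V : Type*} [DecidableEq V] [Fintype V]

theorem aux_out (S : Finset (V × V)) (v : V) : dOutDeg S v = 0 ↔ ∀ z, (v, z) ∉ S := by
  unfold dOutDeg
  rw [Finset.card_eq_zero, Finset.filter_eq_empty_iff]
  constructor
  · intro h z hz
    exact h hz rfl
  · rintro h ⟨a, b⟩ hab rfl
    exact h b hab

theorem aux_in (S : Finset (V × V)) (v : V) : dInDeg S v = 0 ↔ ∀ z, (z, v) ∉ S := by
  unfold dInDeg
  rw [Finset.card_eq_zero, Finset.filter_eq_empty_iff]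
  constructor
  · intro h z hz
    exact h hz rfl
  · rintro h ⟨a, b⟩ hab rfl
    exact h a hab

theorem aux_in_le (S : Finset (V × V)) (v : V) :
    dInDeg S v ≤ 1 ↔ ∀ a b, (a, v) ∈ S → (b, v) ∈ S → a = b := by
  unfold dInDeg
  rw [Finset.card_le_one]
  constructor
  · intro h a b ha hb
    have := h (a, v) (by simp [ha]) (b, v) (by simp [hb])
    simpa using this
  · rintro h ⟨a, a'⟩ ha ⟨b, b'⟩ hb
    simp only [Finset.mem_filter] at ha hb
    obtain ⟨ha, rfl⟩ := ha
    obtain ⟨hb, rfl⟩ := hb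
    rw [h a b ha hb]

theorem aux_span (A S : Finset (V × V)) (r : V) : IsSpanningOutTree A r S ↔
    S ⊆ A ∧ (∀ a, (a, r) ∉ S) ∧ (∀ y a b, (a, y) ∈ S → (b, y) ∈ S → a = b) ∧
      ∀ y, DReach S r y := by
  unfold IsSpanningOutTree IsOutTree
  constructor
  · rintro ⟨⟨h1, h2, h3, h4⟩, h5⟩
    rw [h5] at h3 h4
    rw [aux_in] at h2
    refine ⟨h1, h2, fun y => ?_, fun y => h4 y (Finset.mem_univ _)⟩
    by_cases hy : y = r
    · subst hy
      intro a b ha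
      exact absurd ha (h2 a)
    · rw [← aux_in_le]
      exact (h3 y (Finset.mem_univ _) hy).le
  · rintro ⟨h1, h2, h3, h4⟩
    have key : ∀ y, y ≠ r → ∃ a, (a, y) ∈ S := by
      intro y hy
      rcases Relation.ReflTransGen.cases_tail (h4 y) with h | ⟨c, _, hc⟩
      · exact absurd h hy
      · exact ⟨c, hc⟩
    refine ⟨⟨h1, (aux_in _ _).2 h2, fun y _ hy => ?_, fun y _ => h4 y⟩, ?_⟩
    · have a1 := (aux_in_le S y).2 (h3 y)
      have a2 : dInDeg S y ≠ 0 := by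
        rw [Ne, aux_in]
        obtain ⟨a, ha⟩ := key y hy
        exact fun h => h a ha
      omega
    · ext y
      simp only [Finset.mem_univ, iff_true, dverts, Finset.mem_insert, Finset.mem_union]
      by_cases hy : y = r
      · exact Or.inl hy
      · obtain ⟨a, ha⟩ := key y hy
        exact Or.inr (Or.inr (Finset.mem_image.2 ⟨(a, y), ha, rfl⟩))

theorem aux_step (A S : Finset (V × V)) (r v x w : V) (hS : IsSpanningOutTree A r S)
    (hx : ∀ z, (x, z) ∉ S) (hw : (w, x) ∈ A) (hwx : w ≠ x) (hwv : w ≠ v) :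
    ∃ S', IsSpanningOutTree A r S' ∧ (∀ a ∈ S, a ≠ (v, x) → a ∈ S') ∧ (v, x) ∉ S' ∧
      S' ⊆ insert (w, x) S := by
  by_cases hvx : (v, x) ∈ S
  swap
  · exact ⟨S, hS, fun a h _ => h, hvx, Finset.subset_insert _ _⟩
  rw [aux_span] at hS
  obtain ⟨h1, h2, h3, h4⟩ := hS
  have hmem : ∀ a b, (a, b) ∈ insert (w, x) (S.erase (v, x)) ↔
      (a = w ∧ b = x) ∨ ((a, b) ∈ S ∧ b ≠ x) := by
    intro a b
    simp only [Finset.mem_insert, Finset.mem_erase, Prod.mk.injEq, Ne]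
    constructor
    · rintro (h | ⟨h, h'⟩)
      · exact Or.inl h
      · refine Or.inr ⟨h', ?_⟩
        rintro rfl
        exact h ⟨h3 _ _ _ h' hvx, rfl⟩
    · rintro (h | ⟨h, h'⟩)
      · exact Or.inl h
      · exact Or.inr ⟨fun h'' => h' h''.2, h⟩
  refine ⟨insert (w, x) (S.erase (v, x)), ?_, ?_, ?_, ?_⟩
  · rw [aux_span]
    have hr : ∀ y, y ≠ x → DReach (insert (w, x) (S.erase (v, x))) r y := by
      intro y
      have := h4 y
      unfold DReach at this
      induction this with
      | refl => intro _; exact Relation.ReflTransGen.refl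
      | @tail b c _ hbc ih =>
        intro hc
        have hb : b ≠ x := by
          rintro rfl
          exact hx _ hbc
        exact Relation.ReflTransGen.tail (ih hb) ((hmem b c).2 (Or.inr ⟨hbc, hc⟩))
    refine ⟨?_, ?_, ?_, ?_⟩
    · rintro ⟨a, b⟩ hab
      rcases (hmem a b).1 hab with ⟨rfl, rfl⟩ | ⟨h, _⟩
      · exact hw
      · exact h1 h
    · intro a ha
      rcases (hmem a r).1 ha with ⟨rfl, rfl⟩ | ⟨h, _⟩
      · exact h2 _ hvx
      · exact h2 _ h
    · intro y a b ha hb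
      rcases (hmem a y).1 ha with ⟨rfl, rfl⟩ | ⟨h, h'⟩ <;>
      rcases (hmem b _).1 hb with ⟨rfl, k⟩ | ⟨k, k'⟩
      · rfl
      · exact absurd rfl k'
      · exact absurd k h'
      · exact h3 _ _ _ h k
    · intro y
      by_cases hy : y = x
      · subst hy
        exact Relation.ReflTransGen.tail (hr w hwx) ((hmem w y).2 (Or.inl ⟨rfl, rfl⟩))
      · exact hr y hy
  · intro a ha hne
    exact Finset.mem_insert_of_mem (Finset.mem_erase.2 ⟨hne, ha⟩)
  · rw [hmem]
    rintro (⟨h, _⟩ | ⟨_, h⟩)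
    · exact hwv h.symm
    · exact h rfl
  · exact Finset.insert_subset_insert _ (Finset.erase_subset _ _)

theorem aux_leaf (A S : Finset (V × V)) (r y : V) (hS : IsSpanningOutTree A r S) :
    y ∈ dleaves r S ↔ ∀ z, (y, z) ∉ S := by
  unfold dleaves
  rw [hS.2, Finset.mem_filter, aux_out]
  simp

theorem aux_main (A T Tstar : Finset (V × V)) (r v x₁ x₂ u : V)
    (hA : DLoopless A) (hvdeg : dOutDeg T v = 0)
    (hNv : ∀ y : V, (v, y) ∈ A → y = x₁ ∨ y = x₂)
    (hd2 : 2 ≤ dInDeg A x₂)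
    (hTs : IsSpanningOutTree A r Tstar) (hTTs : T ⊆ Tstar)
    (hvint : 1 ≤ dOutDeg Tstar v) (hx1 : dOutDeg Tstar x₁ = 0)
    (hx2 : dOutDeg Tstar x₂ = 0)
    (hu : (u, x₁) ∈ A) (huv : u ≠ v) (hux₁ : u ≠ x₁)
    (hux₂ : u ≠ x₂) (huint : 1 ≤ dOutDeg Tstar u) :
    ∃ S, IsSpanningOutTree A r S ∧ T ⊆ S ∧ dOutDeg S v = 0 ∧
      (dleaves r Tstar).card ≤ (dleaves r S).card := by
  have hex : ∃ w, (w, x₂) ∈ A ∧ w ≠ v := by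
    by_contra hcon
    push Not at hcon
    have : dInDeg A x₂ ≤ 1 := (aux_in_le _ _).2 fun a b ha hb => (hcon a ha).trans (hcon b hb).symm
    omega
  obtain ⟨w, hw, hwv⟩ := hex
  have hwx : w ≠ x₂ := hA _ hw
  rw [aux_out] at hvdeg hx1 hx2
  have hvl : v ∉ dleaves r Tstar := by
    rw [aux_leaf A _ _ _ hTs, ← aux_out]; omega
  have hul : u ∉ dleaves r Tstar := by
    rw [aux_leaf A _ _ _ hTs, ← aux_out]; omega
  obtain ⟨S, hS, hS1, hS2, hS3⟩ := aux_step A Tstar r v x₁ u hTs hx1 hu hux₁ huv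
  have hx2' : ∀ z, (x₂, z) ∉ S := by
    intro z hz
    rcases Finset.mem_insert.1 (hS3 hz) with h | h
    · exact hux₂ (Prod.mk.inj h).1.symm
    · exact hx2 z h
  obtain ⟨R, hR, hR1, hR2, hR3⟩ := aux_step A S r v x₂ w hS hx2' hw hwx hwv
  have hvR : ∀ z, (v, z) ∉ R := by
    intro z hz
    rcases hNv z (hR.1.1 hz) with rfl | rfl
    · rcases Finset.mem_insert.1 (hR3 hz) with h | h
      · exact hwv (Prod.mk.inj h).1.symm
      · exact hS2 h
    · exact hR2 hz
  refine ⟨R, hR, ?_, (aux_out _ _).2 hvR, ?_⟩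
  · rintro ⟨a, b⟩ hab
    have hav : a ≠ v := by
      rintro rfl
      exact hvdeg _ hab
    exact hR1 _ (hS1 _ (hTTs hab) fun h => hav (Prod.mk.inj h).1) fun h => hav (Prod.mk.inj h).1
  · have hsub : insert v ((dleaves r Tstar).erase w) ⊆ dleaves r R := by
      intro y hy
      rw [aux_leaf A _ _ _ hR]
      rcases Finset.mem_insert.1 hy with rfl | hy
      · exact hvR
      · obtain ⟨hyw, hy⟩ := Finset.mem_erase.1 hy
        intro z hz
        rcases Finset.mem_insert.1 (hR3 hz) with h | h
        · exact hyw (Prod.mk.inj h).1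
        rcases Finset.mem_insert.1 (hS3 h) with h | h
        · rw [(Prod.mk.inj h).1] at hy
          exact hul hy
        · exact (aux_leaf A _ _ _ hTs).1 hy z h
    have h1 := Finset.card_le_card hsub
    rw [Finset.card_insert_of_notMem (fun h => hvl (Finset.mem_of_mem_erase h))] at h1
    have h2 := Finset.pred_card_le_card_erase (s := dleaves r Tstar) (a := w)
    omega

theorem stmt2 (A T T' Tstar : Finset (V × V)) (r v x₁ x₂ u : V)
    (hA : DLoopless A) (hT : IsOutTree A r T) (hv : v ∈ dverts r T)
    (hvdeg : dOutDeg T v = 0)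
    (hNv : ∀ y : V, (v, y) ∈ A ↔ y = x₁ ∨ y = x₂) (hx : x₁ ≠ x₂)
    (hd1 : 2 ≤ dInDeg A x₁) (hd2 : 2 ≤ dInDeg A x₂)
    (hTs : IsSpanningOutTree A r Tstar) (hTTs : T ⊆ Tstar)
    (hvint : 1 ≤ dOutDeg Tstar v) (hx1 : dOutDeg Tstar x₁ = 0)
    (hx2 : dOutDeg Tstar x₂ = 0)
    (hu : (u, x₁) ∈ A ∨ (u, x₂) ∈ A) (huv : u ≠ v) (hux₁ : u ≠ x₁)
    (hux₂ : u ≠ x₂) (huint : 1 ≤ dOutDeg Tstar u)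
    (hT' : IsSpanningOutTree A r T') (hTT' : T ⊆ T')
    (hvleaf : dOutDeg T' v = 0)
    (hopt : ∀ S : Finset (V × V), IsSpanningOutTree A r S → T ⊆ S →
      dOutDeg S v = 0 → (dleaves r S).card ≤ (dleaves r T').card) :
    (dleaves r Tstar).card ≤ (dleaves r T').card := by
  rcases hu with hu | hu
  · obtain ⟨S, h1, h2, h3, h4⟩ := aux_main A T Tstar r v x₁ x₂ u hA hvdeg
      (fun y => (hNv y).1) hd2 hTs hTTs hvint hx1 hx2 hu huv hux₁ hux₂ huint
    exact h4.trans (hopt S h1 h2 h3)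
  · obtain ⟨S, h1, h2, h3, h4⟩ := aux_main A T Tstar r v x₂ x₁ u hA hvdeg
      (fun y h => ((hNv y).1 h).symm) hd1 hTs hTTs hvint hx2 hx1 hu huv hux₂ hux₁ huint
    exact h4.trans (hopt S h1 h2 h3)
end

section
/- Let G=(V,A) be a finite loopless digraph, r ∈ V, and T' a spanning out-tree of G rooted at r. Let (p,w) ∈ T' and let (q,w) ∈ A with q ≠ w such that q is not a descendant of w in T'. Then T'' := (T' \ {(p,w)}) ∪ {(q,w)} is again a spanning out-tree of G rooted at r. Moreover, if q is internal in T', then |leaves(T'')| ≥ |leaves(T')|. -/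
variable {V : Type*} [DecidableEq V] [Fintype V]

theorem stmt3 (A T' : Finset (V × V)) (r p w q : V)
    (hA : DLoopless A) (hT' : IsSpanningOutTree A r T')
    (hpw : (p, w) ∈ T') (hqw : (q, w) ∈ A) (hq : q ≠ w)
    (hdesc : ¬ DReach T' w q) :
    IsSpanningOutTree A r (insert (q, w) (T'.erase (p, w))) ∧
      (1 ≤ dOutDeg T' q →
        (dleaves r T').card ≤
          (dleaves r (insert (q, w) (T'.erase (p, w)))).card) := by
  obtain ⟨⟨hsub, hr0, hin, hreach⟩, hspan⟩ := hT'
  have hin' : ∀ v, v ≠ r → dInDeg T' v = 1 := fun v => hin v (by simp [hspan])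
  have hreach' : ∀ v, DReach T' r v := fun v => hreach v (by simp [hspan])
  have hwr : w ≠ r := by
    rintro rfl
    have := Finset.card_eq_zero.mp hr0
    have h2 : (p, w) ∈ T'.filter (fun a => a.2 = w) := by simp [hpw]
    rw [this] at h2
    simp at h2
  have huniq : ∀ x, (x, w) ∈ T' → x = p := by
    intro x hx
    have h1 := hin' w hwr
    have := Finset.card_le_one.mp h1.le (x, w) (by simp [hx]) (p, w) (by simp [hpw])
    exact congrArg Prod.fst this
  have hne : ∀ v, v ≠ w → dInDeg (insert (q, w) (T'.erase (p, w))) v = dInDeg T' v := by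
    intro v hv
    unfold dInDeg
    congr 1
    ext ⟨a, b⟩
    simp only [Finset.mem_filter, Finset.mem_insert, Finset.mem_erase, Prod.mk.injEq, ne_eq]
    grind
  have hw1 : dInDeg (insert (q, w) (T'.erase (p, w))) w = 1 := by
    unfold dInDeg
    rw [Finset.card_eq_one]
    refine ⟨(q, w), ?_⟩
    ext ⟨a, b⟩
    simp only [Finset.mem_filter, Finset.mem_insert, Finset.mem_erase, Prod.mk.injEq, ne_eq,
      Finset.mem_singleton]
    grind
  have key : ∀ v, DReach T' r v → ¬ DReach T' w v →
      DReach (insert (q, w) (T'.erase (p, w))) r v := by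
    intro v hv
    induction hv with
    | refl => intro _; exact Relation.ReflTransGen.refl
    | @tail b c _ hbc ih =>
      intro hc
      have hcw : c ≠ w := by
        rintro rfl
        exact hc Relation.ReflTransGen.refl
      refine Relation.ReflTransGen.tail (ih fun hb => hc (Relation.ReflTransGen.tail hb hbc)) ?_
      simp [hbc, hcw]
  have hw : DReach (insert (q, w) (T'.erase (p, w))) r w :=
    Relation.ReflTransGen.tail (key q (hreach' q) hdesc) (by simp)
  have hall : ∀ v, DReach (insert (q, w) (T'.erase (p, w))) r v := by
    intro v
    have hv := hreach' v
    induction hv with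
    | refl => exact Relation.ReflTransGen.refl
    | @tail b c _ hbc ih =>
      by_cases hcw : c = w
      · rw [hcw]; exact hw
      · exact Relation.ReflTransGen.tail ih (by simp [hbc, hcw])
  have hspan' : dverts r (insert (q, w) (T'.erase (p, w))) = Finset.univ := by
    rw [Finset.eq_univ_iff_forall]
    intro v
    rcases Relation.ReflTransGen.cases_tail (hall v) with h | ⟨c, _, hc⟩
    · simp [dverts, h]
    · unfold dverts
      refine Finset.mem_insert_of_mem (Finset.mem_union_right _ ?_)
      exact Finset.mem_image.mpr ⟨(c, v), hc, rfl⟩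
  refine ⟨⟨⟨?_, ?_, ?_, fun v _ => hall v⟩, hspan'⟩, ?_⟩
  · exact Finset.insert_subset hqw ((Finset.erase_subset _ _).trans hsub)
  · rw [hne r hwr.symm, hr0]
  · intro v _ hv
    by_cases h : v = w
    · rw [h, hw1]
    · rw [hne v h, hin' v hv]
  · intro hq1
    apply Finset.card_le_card
    unfold dleaves
    rw [hspan, hspan']
    intro v hv
    simp only [Finset.mem_filter, Finset.mem_univ, true_and] at hv ⊢
    have hvq : v ≠ q := by
      rintro rfl
      omega
    unfold dOutDeg at hv ⊢
    rw [Finset.card_eq_zero, Finset.filter_eq_empty_iff] at hv ⊢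
    intro a ha hav
    rcases Finset.mem_insert.mp ha with h | h
    · subst h; exact hvq hav.symm
    · exact hv (Finset.mem_of_mem_erase h) hav
end

section
/- (Soundness of reduction rule R4.) Let G=(V,A) be a finite loopless digraph, r ∈ V, T an out-tree of G rooted at r, and v ∈ V(T). Then for every out-tree T' of G rooted at r with T' ⪰ T in which v is a leaf, every arc of T' incident to v (having v as head or as tail) belongs to T. -/
variable {V : Type*} [DecidableEq V] [Fintype V]

theorem stmt6 (A T : Finset (V × V)) (r v : V)
    (hA : DLoopless A) (hT : IsOutTree A r T) (hv : v ∈ dverts r T) :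
    ∀ T' : Finset (V × V), IsOutTree A r T' → T ⊆ T' → dOutDeg T' v = 0 →
      ∀ a ∈ T', (a.1 = v ∨ a.2 = v) → a ∈ T := by
  intro T' hT' hsub hout a ha hav
  rcases hav with h | h
  · have h0 := Finset.card_eq_zero.mp hout
    have hm : a ∈ T'.filter (fun a => a.1 = v) := Finset.mem_filter.mpr ⟨ha, h⟩
    rw [h0] at hm
    simp at hm
  · have hm : a ∈ T'.filter (fun a => a.2 = v) := Finset.mem_filter.mpr ⟨ha, h⟩
    by_cases hr : v = r
    · have h0 := Finset.card_eq_zero.mp hT'.2.1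
      rw [hr, h0] at hm
      simp at hm
    · have h1 : (T.filter (fun a => a.2 = v)).card = 1 := hT.2.2.1 v hv hr
      have hv' : v ∈ dverts r T' := by
        have : a.2 ∈ T'.image Prod.snd := Finset.mem_image_of_mem _ ha
        rw [h] at this
        exact Finset.mem_insert_of_mem (Finset.mem_union_right _ this)
      have h2 : (T'.filter (fun a => a.2 = v)).card = 1 := hT'.2.2.1 v hv' hr
      have he := Finset.eq_of_subset_of_card_le
        (Finset.filter_subset_filter (fun a : V × V => a.2 = v) hsub) (by rw [h1, h2])
      rw [← he] at hm
      exact (Finset.mem_filter.mp hm).1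
end

section
/- (Soundness of reduction rule R5.) Let G=(V,A) be a finite loopless digraph, r ∈ V, and u ∈ V. Suppose that in the digraph (V, A \ N⁺_A(u)) obtained from G by deleting all arcs with tail u, some vertex of V is not reachable from r by a directed path. Then every spanning out-tree T' of G rooted at r contains at least one arc with tail u; that is, u is internal in every spanning out-tree of G rooted at r. -/
variable {V : Type*} [DecidableEq V] [Fintype V]

theorem stmt8 (A : Finset (V × V)) (r u : V)
    (hA : DLoopless A)
    (hcut : ∃ w : V, ¬ DReach (A.filter fun a => a.1 ≠ u) r w) :
    ∀ T' : Finset (V × V), IsSpanningOutTree A r T' → 1 ≤ dOutDeg T' u := by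
  intro T' hT
  obtain ⟨w, hw⟩ := hcut
  obtain ⟨⟨hsub, -, -, hreach⟩, hspan⟩ := hT
  by_contra hlt
  have h0 : (T'.filter fun a => a.1 = u).card = 0 := by
    unfold dOutDeg at hlt
    omega
  rw [Finset.card_eq_zero, Finset.filter_eq_empty_iff] at h0
  apply hw
  have hr : DReach T' r w := hreach w (by rw [hspan]; exact Finset.mem_univ w)
  refine Relation.ReflTransGen.mono ?_ _ _ hr
  intro a b hab
  exact Finset.mem_filter.mpr ⟨hsub hab, h0 hab⟩
end

section
/- (Correctness of halting rule H3.) Let G=(V,A) be a finite loopless digraph and suppose V is partitioned into two disjoint sets V₁ and V₂ with u ∈ V₁, v ∈ V₂, r ∈ V₁, |V₁| ≥ 2, |V₂| ≥ 2, such that the only arc of A with tail in V₁ and head in V₂ is (u,v). Then there is no spanning out-tree of G rooted at r in which v is a leaf. -/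
variable {V : Type*} [DecidableEq V] [Fintype V]

theorem stmt12 (A : Finset (V × V)) (V₁ V₂ : Finset V) (r u v : V)
    (hA : DLoopless A) (hpart : V₁ ∪ V₂ = Finset.univ)
    (hdisj : Disjoint V₁ V₂) (hu : u ∈ V₁) (hv : v ∈ V₂) (hr : r ∈ V₁)
    (hV₁ : 2 ≤ V₁.card) (hV₂ : 2 ≤ V₂.card) (huv : (u, v) ∈ A)
    (honly : ∀ p ∈ A, p.1 ∈ V₁ → p.2 ∈ V₂ → p = (u, v)) :
    ¬ ∃ T' : Finset (V × V), IsSpanningOutTree A r T' ∧ v ∈ dleaves r T' := by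
  rintro ⟨T, ⟨⟨hTA, -, -, hreach⟩, hspan⟩, hleaf⟩
  have hout : ∀ b, (v, b) ∉ T := by
    intro b hb
    have h0 := (Finset.mem_filter.mp hleaf).2
    unfold dOutDeg at h0
    rw [Finset.card_eq_zero] at h0
    have : (v, b) ∈ T.filter fun a => a.1 = v := Finset.mem_filter.mpr ⟨hb, rfl⟩
    rw [h0] at this
    simp at this
  have key : ∀ w, DReach T r w → w ∈ V₁ ∨ w = v := by
    intro w hw
    induction hw with
    | refl => exact Or.inl hr
    | @tail b c _ hbc ih =>
      rcases ih with ih | ih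
      · have hc : c ∈ V₁ ∪ V₂ := by rw [hpart]; exact Finset.mem_univ c
        rcases Finset.mem_union.mp hc with h | h
        · exact Or.inl h
        · exact Or.inr (congrArg Prod.snd (honly _ (hTA hbc) ih h))
      · subst ih
        exact absurd hbc (hout c)
  obtain ⟨w, hw, hne⟩ := Finset.exists_mem_ne (by omega : 1 < V₂.card) v
  rcases key w (hreach w (by rw [hspan]; exact Finset.mem_univ w)) with h | h
  · exact Finset.disjoint_left.mp hdisj h hw
  · exact hne h
end

section
/- (Correctness of branching rule B1.) Let G=(V,A) be a finite loopless digraph, r ∈ V, T an out-tree of G rooted at r, and v₀ ∈ V(T) a vertex with out-degree 0 in T and out-degree 1 in G. Let v₀, v₁, …, v_k (k ≥ 1) be pairwise distinct vertices such that: N⁺(v₀) = {v₁}; for each i with 1 ≤ i ≤ k−1, N⁺(v_i) \ {v₀,…,v_{i−1}} = {v_{i+1}}; N⁺(v_k) ⊆ {v₀,…,v_{k−1}}; and v₁,…,v_k ∉ V(T). Assume moreover that for every i with 1 ≤ i ≤ k there exist an index z with 1 ≤ z ≤ i and a vertex q ∉ {v₀,…,v_k} with (q,v_z) ∈ A. Then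 for every spanning out-tree T' of G rooted at r with T' ⪰ T there exists a spanning out-tree T'' of G rooted at r with T'' ⪰ T such that v₀ is a leaf of T'' and |leaves(T'')| ≥ |leaves(T')|. -/
variable {V : Type*} [DecidableEq V] [Fintype V]

theorem stmt13 (A T : Finset (V × V)) (r : V) (k : ℕ) (v : ℕ → V)
    (hA : DLoopless A) (hT : IsOutTree A r T) (hk : 1 ≤ k)
    (hinj : ∀ i j, i ≤ k → j ≤ k → v i = v j → i = j)
    (hv0T : v 0 ∈ dverts r T) (hv0deg : dOutDeg T (v 0) = 0)
    (hv0G : dOutDeg A (v 0) = 1)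
    (hN0 : ∀ y : V, (v 0, y) ∈ A ↔ y = v 1)
    (hNi : ∀ i, 1 ≤ i → i ≤ k - 1 →
      ∀ y : V, ((v i, y) ∈ A ∧ ∀ j < i, y ≠ v j) ↔ y = v (i + 1))
    (hNk : ∀ y : V, (v k, y) ∈ A → ∃ j < k, y = v j)
    (hfree : ∀ i, 1 ≤ i → i ≤ k → v i ∉ dverts r T)
    (hq : ∀ i, 1 ≤ i → i ≤ k → ∃ z, 1 ≤ z ∧ z ≤ i ∧
      ∃ q : V, (∀ j ≤ k, q ≠ v j) ∧ (q, v z) ∈ A) :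
    ∀ T' : Finset (V × V), IsSpanningOutTree A r T' → T ⊆ T' →
      ∃ T'' : Finset (V × V), IsSpanningOutTree A r T'' ∧ T ⊆ T'' ∧
        v 0 ∈ dleaves r T'' ∧ (dleaves r T').card ≤ (dleaves r T'').card := by
  intro T' hT' hTT'
  obtain ⟨⟨hsub, hr0, hin, hreach⟩, hspan⟩ := hT'
  have hout : ∀ (S : Finset (V × V)) (x : V), dOutDeg S x = 0 ↔ ∀ y, (x, y) ∉ S := by
    intro S x
    simp only [dOutDeg, Finset.card_eq_zero, Finset.filter_eq_empty_iff]
    constructor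
    · intro h y hy
      exact h hy rfl
    · rintro h ⟨a, b⟩ hab rfl
      exact h b hab
  by_cases hleaf : dOutDeg T' (v 0) = 0
  · exact ⟨T', ⟨⟨hsub, hr0, hin, hreach⟩, hspan⟩, hTT', by simp [dleaves, hspan, hleaf], le_rfl⟩
  have h01 : (v 0, v 1) ∈ T' := by
    rw [hout] at hleaf
    push Not at hleaf
    obtain ⟨y, hy⟩ := hleaf
    rwa [← (hN0 y).1 (hsub hy)]
  obtain ⟨z, hz1, hz2, q, hqv, hqA⟩ := hq 1 le_rfl hk
  obtain rfl : z = 1 := by omega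
  have h1r : v 1 ≠ r := by
    intro h
    exact hfree 1 le_rfl hk (by simp [dverts, h])
  have hq0 : q ≠ v 0 := hqv 0 (by omega)
  have hclosed : ∀ x, DReach T' (v 1) x → ∃ i ≤ k, x = v i := by
    intro x hx
    induction hx with
    | refl => exact ⟨1, hk, rfl⟩
    | tail _ hbc ih =>
      rename_i b c _
      obtain ⟨i, hi, rfl⟩ := ih
      have hA' := hsub hbc
      rcases Nat.eq_zero_or_pos i with rfl | hpos
      · exact ⟨1, hk, (hN0 c).1 hA'⟩
      rcases Nat.lt_or_ge i k with hlt | hge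
      · by_cases hj : ∀ j < i, c ≠ v j
        · exact ⟨i + 1, hlt, (hNi i hpos (by omega) c).1 ⟨hA', hj⟩⟩
        · push Not at hj
          obtain ⟨j, hj, rfl⟩ := hj
          exact ⟨j, by omega, rfl⟩
      · obtain rfl : i = k := by omega
        obtain ⟨j, hj, rfl⟩ := hNk c hA'
        exact ⟨j, by omega, rfl⟩
  have hqn : ¬ DReach T' (v 1) q := by
    intro h
    obtain ⟨i, hi, h⟩ := hclosed q h
    exact hqv i hi h
  obtain ⟨S, hS⟩ : ∃ S, S = insert (q, v 1) (T'.erase (v 0, v 1)) := ⟨_, rfl⟩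
  have hmem : ∀ a b, (a, b) ∈ S ↔ (a = q ∧ b = v 1) ∨ (¬ (a = v 0 ∧ b = v 1) ∧ (a, b) ∈ T') := by
    intro a b
    simp [hS]
  have huniq : ∀ a, (a, v 1) ∈ T' → a = v 0 := by
    intro a ha
    have := hin (v 1) (by simp [hspan]) h1r
    have := Finset.card_le_one.1 this.le (a, v 1) (by simp [ha]) (v 0, v 1) (by simp [h01])
    exact congrArg Prod.fst this
  have hreach1 : ∀ x, DReach T' r x → DReach S r x ∨ DReach T' (v 1) x := by
    intro x hx
    induction hx with
    | refl => exact Or.inl Relation.ReflTransGen.refl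
    | tail _ hbc ih =>
      rename_i b c _
      rcases ih with ih | ih
      · by_cases hc : c = v 1
        · subst hc
          exact Or.inr Relation.ReflTransGen.refl
        · exact Or.inl (ih.tail ((hmem _ _).2 (Or.inr ⟨fun h => hc h.2, hbc⟩)))
      · exact Or.inr (ih.tail hbc)
  have hSq : DReach S r q := (hreach1 q (hreach q (by simp [hspan]))).resolve_right hqn
  have hS1 : DReach S r (v 1) := hSq.tail ((hmem _ _).2 (Or.inl ⟨rfl, rfl⟩))
  have hreach2 : ∀ x, DReach T' r x → DReach S r x := by
    intro x hx
    induction hx with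
    | refl => exact Relation.ReflTransGen.refl
    | tail _ hbc ih =>
      rename_i b c _
      by_cases hc : c = v 1
      · rwa [hc]
      · exact ih.tail ((hmem _ _).2 (Or.inr ⟨fun h => hc h.2, hbc⟩))
  have hdeg : ∀ x, x ≠ v 1 → dInDeg S x = dInDeg T' x := by
    intro x hx
    unfold dInDeg
    congr 1
    ext ⟨a, b⟩
    simp only [Finset.mem_filter, hmem]
    grind
  have hdeg1 : dInDeg S (v 1) = 1 := by
    unfold dInDeg
    rw [Finset.card_eq_one]
    refine ⟨(q, v 1), ?_⟩
    ext ⟨a, b⟩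
    simp only [Finset.mem_filter, hmem, Finset.mem_singleton, Prod.mk.injEq]
    grind
  have hSspan : dverts r S = Finset.univ := by
    ext x
    simp only [Finset.mem_univ, iff_true]
    rcases Relation.ReflTransGen.cases_tail (hreach2 x (hreach x (by simp [hspan]))) with h | ⟨c, _, h⟩
    · simp [dverts, h]
    · simp only [dverts, Finset.mem_insert, Finset.mem_union, Finset.mem_image]
      exact Or.inr (Or.inr ⟨_, h, rfl⟩)
  have hl : ∀ x, x ≠ v 0 → x ≠ q → dOutDeg T' x = 0 → dOutDeg S x = 0 := by
    intro x h0 hxq h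
    rw [hout] at h ⊢
    intro y hy
    rcases (hmem _ _).1 hy with h' | h'
    · exact hxq h'.1
    · exact h y h'.2
  have hv0S : v 0 ∈ dleaves r S := by
    simp only [dleaves, hSspan, Finset.mem_filter, Finset.mem_univ, true_and]
    rw [hout]
    intro y hy
    rcases (hmem _ _).1 hy with h' | h'
    · exact hq0 h'.1.symm
    · exact h'.1 ⟨rfl, (hN0 y).1 (hsub h'.2)⟩
  refine ⟨S, ⟨⟨?_, ?_, ?_, ?_⟩, hSspan⟩, ?_, hv0S, ?_⟩
  · rintro ⟨a, b⟩ hab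
    rcases (hmem _ _).1 hab with ⟨rfl, rfl⟩ | h
    · exact hqA
    · exact hsub h.2
  · rw [hdeg r h1r.symm, hr0]
  · intro x _ hxr
    by_cases hx : x = v 1
    · rw [hx, hdeg1]
    · rw [hdeg x hx, hin x (by simp [hspan]) hxr]
  · intro x _
    exact hreach2 x (hreach x (by simp [hspan]))
  · rintro ⟨a, b⟩ hab
    refine (hmem _ _).2 (Or.inr ⟨?_, hTT' hab⟩)
    rintro ⟨rfl, rfl⟩
    exact (hout T (v 0)).1 hv0deg _ hab
  · have hss : dleaves r T' ⊆ insert q ((dleaves r S).erase (v 0)) := by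
      intro x hx
      simp only [dleaves, hspan, hSspan, Finset.mem_filter, Finset.mem_univ, true_and,
        Finset.mem_insert, Finset.mem_erase] at hx ⊢
      by_cases hxq : x = q
      · exact Or.inl hxq
      · have h0 : x ≠ v 0 := by
          rintro rfl
          exact hleaf hx
        exact Or.inr ⟨h0, hl x h0 hxq hx⟩
    calc _ ≤ _ := Finset.card_le_card hss
      _ ≤ _ := Finset.card_insert_le _ _
      _ = _ := Finset.card_erase_add_one hv0S
end
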